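/- Let V be a finite type, c : Fin (m+1) → V a simple directed cycle of length m ≥ 1, and χ : V → V → ℝ the indicator function of the arcs of c. If χ = g + h where g and h are both nonnegative circulations on V, then there exists a ∈ [0,1] such that g = a·χ and h = (1−a)·χ. In other words, χ cannot be written as the sum of two elements of the circulation cone that are not scalar multiples of χ, so χ spans an extreme ray of the cone of nonnegative circulations. -/

import Mathlib

open Classical

/-!
If `χ = g + h` with `g, h ≥ 0`, then `g` vanishes off the arcs of the cycle. Every vertex of the
cycle is entered by only one arc and left by only one arc, so conservation at that vertex says that
`g` takes equal values on these two arcs. Going around the cycle, `g` is constant on its arcs.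
-/

section Definitions

variable {V M R : Type*} {m : ℕ}

/-- Flow conservation at every vertex. To allow infinite vertex types the sums are `∑ᶠ`, which
is `0` when infinitely many terms are nonzero. -/
def IsCirculation [AddCommMonoid M] (f : V → V → M) : Prop :=
  ∀ v, ∑ᶠ u, f u v = ∑ᶠ u, f v u

/-- A simple directed cycle of length `m`, listed with its initial vertex repeated at the end;
a loop is a cycle of length `1`. -/
structure IsSimpleCycle (c : Fin (m + 1) → V) : Prop where
  length_pos : 0 < m
  closed : c 0 = c (Fin.last m)
  injective_castSucc : Function.Injective fun i : Fin m => c i.castSucc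

/-- The arcs of a directed walk, given by the list `c` of its vertices. -/
def IsArc (c : Fin (m + 1) → V) (u v : V) : Prop :=
  ∃ i : Fin m, c i.castSucc = u ∧ c i.succ = v

/-- The indicator function of the set of arcs of a walk: an arc that is traversed several times
still has value `1`. -/
noncomputable def arcIndicator [Zero R] [One R] (c : Fin (m + 1) → V) (u v : V) : R :=
  if IsArc c u v then 1 else 0

end Definitions

namespace IsSimpleCycle

variable {V : Type*} {m : ℕ} {c : Fin (m + 1) → V}

theorem apply_succ [NeZero m] (hc : IsSimpleCycle c) (i : Fin m) :
    c i.succ = c (i + 1).castSucc := by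
  obtain ⟨n, rfl⟩ := Nat.exists_eq_add_one.mpr hc.length_pos
  cases i using Fin.lastCases with
  | last => rw [Fin.succ_last, Fin.last_add_one, Fin.castSucc_zero, hc.closed]
  | cast i => rw [Fin.coeSucc_eq_succ, Fin.succ_castSucc]

theorem injective_succ (hc : IsSimpleCycle c) : Function.Injective fun i : Fin m => c i.succ := by
  have : NeZero m := .of_pos hc.length_pos
  simp only [hc.apply_succ]
  exact hc.injective_castSucc.comp (add_left_injective 1)

theorem eq_of_isArc_succ (hc : IsSimpleCycle c) {i : Fin m} {u : V}
    (h : IsArc c u (c i.succ)) : u = c i.castSucc := by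
  obtain ⟨j, rfl, hj⟩ := h
  rw [hc.injective_succ hj]

theorem eq_of_isArc_castSucc (hc : IsSimpleCycle c) {i : Fin m} {v : V}
    (h : IsArc c (c i.castSucc) v) : v = c i.succ := by
  obtain ⟨j, hj, rfl⟩ := h
  rw [hc.injective_castSucc hj]

end IsSimpleCycle

namespace IsCirculation

variable {V M R : Type*} {m : ℕ} {c : Fin (m + 1) → V}

theorem inflow_eq_outflow_of_unique [AddCommMonoid M] {g : V → V → M} (hg : IsCirculation g)
    {u v w : V} (hin : ∀ x, g x v ≠ 0 → x = u) (hout : ∀ x, g v x ≠ 0 → x = w) :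
    g u v = g v w :=
  calc
    g u v = ∑ᶠ x, g x v := (finsum_eq_single _ u fun x => not_imp_comm.1 (hin x)).symm
    _ = ∑ᶠ x, g v x := hg v
    _ = g v w := finsum_eq_single _ w fun x => not_imp_comm.1 (hout x)

theorem apply_arc_eq_apply_next_arc [AddCommMonoid M] [NeZero m] {g : V → V → M}
    (hg : IsCirculation g) (hc : IsSimpleCycle c) (hsupp : ∀ u v, g u v ≠ 0 → IsArc c u v)
    (i : Fin m) :
    g (c i.castSucc) (c i.succ) = g (c (i + 1).castSucc) (c (i + 1).succ) := by
  rw [← hc.apply_succ i]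
  refine hg.inflow_eq_outflow_of_unique (fun x hx => hc.eq_of_isArc_succ (hsupp _ _ hx))
    fun x hx => hc.eq_of_isArc_castSucc ?_
  rw [← hc.apply_succ i]
  exact hsupp _ _ hx

theorem apply_arc_eq_apply_arc [AddCommMonoid M] {g : V → V → M} (hg : IsCirculation g)
    (hc : IsSimpleCycle c) (hsupp : ∀ u v, g u v ≠ 0 → IsArc c u v) (i j : Fin m) :
    g (c i.castSucc) (c i.succ) = g (c j.castSucc) (c j.succ) := by
  obtain ⟨n, rfl⟩ := Nat.exists_eq_add_one.mpr hc.length_pos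
  have eq_first (k : Fin (n + 1)) :
      g (c k.castSucc) (c k.succ) = g (c (Fin.castSucc 0)) (c (Fin.succ 0)) := by
    induction k using Fin.induction with
    | zero => rfl
    | succ k ih => rw [← ih, hg.apply_arc_eq_apply_next_arc hc hsupp k.castSucc,
        Fin.coeSucc_eq_succ]
  rw [eq_first i, eq_first j]

theorem eq_mul_arcIndicator [NonAssocSemiring R] {g : V → V → R} (hg : IsCirculation g)
    (hc : IsSimpleCycle c) (hsupp : ∀ u v, g u v ≠ 0 → IsArc c u v) (i : Fin m) (u v : V) :
    g u v = g (c i.castSucc) (c i.succ) * arcIndicator c u v := by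
  by_cases huv : IsArc c u v
  · rw [arcIndicator, if_pos huv, mul_one]
    obtain ⟨j, rfl, rfl⟩ := huv
    exact hg.apply_arc_eq_apply_arc hc hsupp j i
  · rw [arcIndicator, if_neg huv, mul_zero]
    exact not_imp_comm.1 (hsupp u v) huv

end IsCirculation

theorem isArc_of_summand_ne_zero {V R : Type*} [AddCommMonoid R] [One R] [PartialOrder R]
    [IsOrderedAddMonoid R] {m : ℕ} {c : Fin (m + 1) → V} {g h : V → V → R}
    (hgnn : ∀ u v, 0 ≤ g u v) (hhnn : ∀ u v, 0 ≤ h u v)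
    (hsum : ∀ u v, arcIndicator c u v = g u v + h u v) (u v : V) (hne : g u v ≠ 0) :
    IsArc c u v := by
  by_contra huv
  have add_eq_zero : g u v + h u v = 0 := by rw [← hsum, arcIndicator, if_neg huv]
  exact hne ((add_eq_zero_iff_of_nonneg (hgnn u v) (hhnn u v)).1 add_eq_zero).1

theorem stmt6_general {V R : Type*} [NonAssocRing R] [PartialOrder R] [IsOrderedAddMonoid R]
    {m : ℕ} {c : Fin (m + 1) → V} (hc : IsSimpleCycle c) {g h : V → V → R}
    (hgnn : ∀ u v, 0 ≤ g u v) (hg : IsCirculation g) (hhnn : ∀ u v, 0 ≤ h u v)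
    (hsum : ∀ u v, arcIndicator c u v = g u v + h u v) :
    ∃ a : R, 0 ≤ a ∧ a ≤ 1 ∧ (∀ u v, g u v = a * arcIndicator c u v) ∧
      (∀ u v, h u v = (1 - a) * arcIndicator c u v) := by
  let i : Fin m := ⟨0, hc.length_pos⟩
  have g_eq := hg.eq_mul_arcIndicator hc (isArc_of_summand_ne_zero hgnn hhnn hsum) i
  refine ⟨g (c i.castSucc) (c i.succ), hgnn _ _, ?_, g_eq, fun u v => ?_⟩
  · calc
      g (c i.castSucc) (c i.succ) ≤ g (c i.castSucc) (c i.succ) + h (c i.castSucc) (c i.succ) :=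
        le_add_of_nonneg_right (hhnn _ _)
      _ = arcIndicator c (c i.castSucc) (c i.succ) := (hsum _ _).symm
      _ = 1 := if_pos ⟨i, rfl, rfl⟩
  · rw [sub_mul, one_mul, ← g_eq, hsum, add_sub_cancel_left]

/-- If the indicator function `χ` of the arcs of a simple directed cycle
decomposes as `χ = g + h` with `g, h` nonnegative circulations, then `g = a·χ` and
`h = (1−a)·χ` for some `a ∈ [0,1]`; hence `χ` spans an extreme ray of the cone of
nonnegative circulations. -/
theorem stmt6 {V : Type*} [Fintype V] {m : ℕ} (hm : 1 ≤ m)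
    (c : Fin (m + 1) → V)
    (hc0 : c 0 = c (Fin.last m))
    (hinj : Function.Injective (fun i : Fin m => c i.castSucc))
    (χ : V → V → ℝ)
    (hχ : ∀ u v, χ u v =
      if ∃ i : Fin m, c i.castSucc = u ∧ c i.succ = v then 1 else 0)
    (g h : V → V → ℝ)
    (hgnn : ∀ u v, 0 ≤ g u v) (hgcons : ∀ v, ∑ u, g u v = ∑ u, g v u)
    (hhnn : ∀ u v, 0 ≤ h u v) (hhcons : ∀ v, ∑ u, h u v = ∑ u, h v u)
    (hsum : ∀ u v, χ u v = g u v + h u v) :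
    ∃ a : ℝ, 0 ≤ a ∧ a ≤ 1 ∧
      (∀ u v, g u v = a * χ u v) ∧ (∀ u v, h u v = (1 - a) * χ u v) := by
  obtain rfl : χ = arcIndicator c := funext₂ fun u v => (hχ u v).trans (if_congr .rfl rfl rfl)
  exact stmt6_general ⟨hm, hc0, hinj⟩ hgnn
    (fun v => by simpa only [finsum_eq_sum_of_fintype] using hgcons v) hhnn hsum
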